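/- arXiv:2309.11078 — 8 statements merged into one kernel-verified Lean document; each statement's English description precedes it below -/
import Mathlib

section
/- Let S be a semigroup with functions e, s : S → S satisfying conditions (A1) and (A2). Then for every idempotent f ∈ E(S), the Clifford component S_f = {a ∈ S : e(a) = f} contains f, is closed under multiplication and under s, and is a group under the induced multiplication with identity element f and with inversion given by s. Consequently S is the disjoint union of the groups S_f for f ∈ E(S). -/
/-- Condition (A1): for all x, x·e(x) = e(x)·x = x, and every f with
x·f = f·x = x satisfies e(x)·f = f·e(x) = e(x). -/
def CondA1 {S : Type*} [Semigroup S] (e : S → S) : Prop :=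
  ∀ x : S, (x * e x = x ∧ e x * x = x) ∧
    ∀ f : S, x * f = x → f * x = x → e x * f = e x ∧ f * e x = e x

/-- Condition (A2): for all x, x·s(x) = s(x)·x = e(x) and e(s(x)) = e(x). -/
def CondA2 {S : Type*} [Semigroup S] (e s : S → S) : Prop :=
  ∀ x : S, x * s x = e x ∧ s x * x = e x ∧ e (s x) = e x

/-- Condition (A3): e is multiplicative. -/
def CondA3 {S : Type*} [Semigroup S] (e : S → S) : Prop :=
  ∀ x y : S, e (x * y) = e x * e y

namespace CondA1

variable {S : Type*} [Semigroup S] {e : S → S} {x x' y y' f : S}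

theorem mul_apply_self (h : CondA1 e) (x : S) : x * e x = x :=
  (h x).1.1

theorem apply_mul_self (h : CondA1 e) (x : S) : e x * x = x :=
  (h x).1.2

theorem isIdempotentElem_apply (h : CondA1 e) (x : S) : IsIdempotentElem (e x) :=
  ((h x).2 (e x) (h.mul_apply_self x) (h.apply_mul_self x)).1

/-- Among the two-sided local identities of `x`, the element `e x` is the least by (A1), while one
that is a right multiple of `x` lies below every left identity of `x`, in particular `e x`. -/
theorem apply_eq_of_mul_eq (h : CondA1 e) (hxf : x * f = x) (hfx : f * x = x)
    (hxy : x * y = f) : e x = f :=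
  calc
    e x = e x * f := ((h x).2 f hxf hfx).1.symm
    _ = e x * x * y := by rw [← hxy, mul_assoc]
    _ = f := by rw [h.apply_mul_self, hxy]

theorem apply_eq_self_of_isIdempotentElem (h : CondA1 e) (hf : IsIdempotentElem f) : e f = f :=
  h.apply_eq_of_mul_eq hf hf hf

theorem apply_mul_of_apply_eq (h : CondA1 e) (hx : x * x' = e x) (hy : y * y' = e y)
    (hxy : e x = e y) : e (x * y) = e x := by
  have right_id : x * y * e x = x * y := by rw [hxy, mul_assoc, h.mul_apply_self]
  have left_id : e x * (x * y) = x * y := by rw [← mul_assoc, h.apply_mul_self]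
  have right_inv : x * y * (y' * x') = e x :=
    calc
      x * y * (y' * x') = x * (y * y') * x' := by simp only [mul_assoc]
      _ = e x := by rw [hy, ← hxy, h.mul_apply_self, hx]
  exact h.apply_eq_of_mul_eq right_id left_id right_inv

end CondA1

/-- under (A1) and (A2), each Clifford component
S_f = {a | e(a) = f} (f idempotent) contains f, is closed under multiplication
and s, and is a group with identity f and inversion s; consequently S is the
disjoint union of these groups. -/
theorem stmt_2 {S : Type*} [Semigroup S] (e s : S → S)
    (h1 : CondA1 e) (h2 : CondA2 e s) :
    (∀ f : S, f * f = f →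
      (e f = f) ∧
      (∀ a b : S, e a = f → e b = f → e (a * b) = f) ∧
      (∀ a : S, e a = f → e (s a) = f) ∧
      (∀ a : S, e a = f → f * a = a ∧ a * f = a) ∧
      (∀ a : S, e a = f → a * s a = f ∧ s a * a = f)) ∧
    (∀ a : S, e a * e a = e a) ∧
    (Set.univ = ⋃ f ∈ {f : S | f * f = f}, {a : S | e a = f}) ∧
    (∀ f g : S, f * f = f → g * g = g → f ≠ g →
      {a : S | e a = f} ∩ {a : S | e a = g} = ∅) := by
  refine ⟨fun f hf => ⟨h1.apply_eq_self_of_isIdempotentElem hf, ?mul_mem, ?inv_mem,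
    ?identity, ?inverse⟩, h1.isIdempotentElem_apply, ?cover, ?disjoint⟩
  case mul_mem =>
    intro a b ha hb
    rw [h1.apply_mul_of_apply_eq (h2 a).1 (h2 b).1 (ha.trans hb.symm), ha]
  case inv_mem =>
    exact fun a ha => (h2 a).2.2.trans ha
  case identity =>
    rintro a rfl
    exact ⟨h1.apply_mul_self a, h1.mul_apply_self a⟩
  case inverse =>
    rintro a rfl
    exact ⟨(h2 a).1, (h2 a).2.1⟩
  case cover =>
    exact (Set.iUnion₂_eq_univ_iff.2 fun a => ⟨e a, h1.isIdempotentElem_apply a, rfl⟩).symm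
  case disjoint =>
    exact fun f g _ _ hfg => ((Set.disjoint_singleton.2 hfg).preimage e).inter_eq
end

section
/- Let S be a semigroup such that every element of S belongs to some subset of S that is closed under multiplication and is a group under the induced multiplication (i.e., S is a union of groups). Then there exist functions e, s : S → S satisfying conditions (A1) and (A2). -/
/-- A subset of a semigroup that is closed under multiplication and is a group
under the induced multiplication. -/
def IsSubgroupSet {S : Type*} [Semigroup S] (G : Set S) : Prop :=
  (∀ a ∈ G, ∀ b ∈ G, a * b ∈ G) ∧
  ∃ i ∈ G, (∀ a ∈ G, i * a = a ∧ a * i = a) ∧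
    ∀ a ∈ G, ∃ b ∈ G, a * b = i ∧ b * a = i

/-!
The subgroups chosen for `x` and for its inverse `s x` may differ, so `e (s x) = e x` is the only
delicate point. It holds because the identity `x * y` attached to `x` is the same for every
commuting inverse `y` of `x`, and `x` is itself a commuting inverse of `s x`.
-/

/-- `y` is a group inverse of `x`: a commuting inverse in the sense of semigroup theory. It records
that `y` inverts `x` in some subgroup of `S` without naming the subgroup or its identity `x * y`. -/
structure IsGroupInverse {S : Type*} [Semigroup S] (x y : S) : Prop where
  comm : x * y = y * x
  mul_mul_self : x * y * x = x
  mul_mul_inverse : y * x * y = y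

namespace IsGroupInverse

variable {S : Type*} [Semigroup S] {x y z f : S}

theorem symm (h : IsGroupInverse x y) : IsGroupInverse y x where
  comm := h.comm.symm
  mul_mul_self := h.mul_mul_inverse
  mul_mul_inverse := h.mul_mul_self

theorem self_mul_mul (h : IsGroupInverse x y) : x * (x * y) = x := by
  rw [h.comm, ← mul_assoc, h.mul_mul_self]

theorem mul_mul_eq_of_mul_eq_self (h : IsGroupInverse x y) (hf : x * f = x) :
    x * y * f = x * y := by
  rw [h.comm, mul_assoc, hf]

theorem mul_eq_mul (hy : IsGroupInverse x y) (hz : IsGroupInverse x z) : x * y = x * z :=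
  calc
    x * y = x * y * (x * z) := (hy.mul_mul_eq_of_mul_eq_self hz.self_mul_mul).symm
    _ = x * z := by rw [← mul_assoc, hy.mul_mul_self]

end IsGroupInverse

theorem IsSubgroupSet.exists_isGroupInverse {S : Type*} [Semigroup S] {G : Set S} {x : S}
    (hG : IsSubgroupSet G) (hx : x ∈ G) : ∃ y, IsGroupInverse x y := by
  obtain ⟨-, i, -, hid, hinv⟩ := hG
  obtain ⟨y, hy, hxy, hyx⟩ := hinv x hx
  exact ⟨y, hxy.trans hyx.symm, by rw [hxy, (hid x hx).1], by rw [hyx, (hid y hy).1]⟩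

section GroupInverseFunction

variable {S : Type*} [Semigroup S] {s : S → S}

theorem condA1_of_isGroupInverse (hs : ∀ x, IsGroupInverse x (s x)) :
    CondA1 fun x => x * s x := fun x =>
  ⟨⟨(hs x).self_mul_mul, (hs x).mul_mul_self⟩, fun _ hxf hfx =>
    ⟨(hs x).mul_mul_eq_of_mul_eq_self hxf, by rw [← mul_assoc, hfx]⟩⟩

theorem condA2_of_isGroupInverse (hs : ∀ x, IsGroupInverse x (s x)) :
    CondA2 (fun x => x * s x) s := by
  intro x
  have identity_eq : s x * s (s x) = x * s x :=
    calc
      s x * s (s x) = s x * x := (hs (s x)).mul_eq_mul (hs x).symm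
      _ = x * s x := (hs x).comm.symm
  exact ⟨rfl, (hs x).comm.symm, identity_eq⟩

end GroupInverseFunction

/-- if a semigroup S is a union of groups, then there exist
functions e, s : S → S satisfying (A1) and (A2). -/
theorem stmt_3 {S : Type*} [Semigroup S]
    (h : ∀ x : S, ∃ G : Set S, x ∈ G ∧ IsSubgroupSet G) :
    ∃ e s : S → S, CondA1 e ∧ CondA2 e s := by
  have exists_inverse (x : S) : ∃ y, IsGroupInverse x y := by
    obtain ⟨G, hx, hG⟩ := h x
    exact hG.exists_isGroupInverse hx
  choose s hs using exists_inverse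
  exact ⟨fun x => x * s x, s, condA1_of_isGroupInverse hs, condA2_of_isGroupInverse hs⟩
end

section
/- Let S be a semigroup with functions e, s : S → S satisfying conditions (A1) and (A2), and suppose that the idempotents of S commute pairwise, i.e., f·g = g·f for all f, g ∈ E(S). Then condition (A3) holds: e(x·y) = e(x)·e(y) for all x, y ∈ S; hence S is an assembly. -/
/-!
In a semigroup whose elements all lie in subgroups, commuting idempotents are central. Let `f` be
idempotent and let `g` be the identity of a subgroup containing `u = x * f`. From `u * f = u`,
cancelling `u` in the group gives `g * f = g`, hence `f * g = g` and `f * u = u`, i.e.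
`f * x * f = x * f`. Dually `f * x * f = f * x`, so `x * f = f * x`. Once the identities are
central, the product of the identities of `x` and `y` is the identity of a subgroup containing
`x * y`, and such an identity is unique.
-/

/-- `g` is the identity of a subgroup of the semigroup `S` that contains `x`; this is how `e x`
is related to `x` in an assembly. The element `y` need not lie in the subgroup: the inverse of `x`
there is `g * y * g`. -/
structure IsGroupIdentity {S : Type*} [Semigroup S] (g x : S) : Prop where
  identity_mul : g * x = x
  mul_identity : x * g = x
  exists_inverse : ∃ y, x * y = g ∧ y * x = g

namespace IsGroupIdentity

variable {S : Type*} [Semigroup S] {f g h x y : S}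

theorem identity_mul_eq_identity_iff (hg : IsGroupIdentity g x) : g * f = g ↔ x * f = x := by
  obtain ⟨y, -, hyx⟩ := hg.exists_inverse
  constructor <;> intro hf
  · rw [← hg.mul_identity, mul_assoc, hf]
  · rw [← hyx, mul_assoc, hf]

theorem mul_identity_eq_identity_iff (hg : IsGroupIdentity g x) : f * g = g ↔ f * x = x := by
  obtain ⟨y, hxy, -⟩ := hg.exists_inverse
  constructor <;> intro hf
  · rw [← hg.identity_mul, ← mul_assoc, hf]
  · rw [← hxy, ← mul_assoc, hf]

theorem isIdempotentElem (hg : IsGroupIdentity g x) : IsIdempotentElem g :=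
  hg.identity_mul_eq_identity_iff.mpr hg.mul_identity

theorem unique (hg : IsGroupIdentity g x) (hh : IsGroupIdentity h x) : g = h :=
  calc
    g = g * h := (hg.identity_mul_eq_identity_iff.mpr hh.mul_identity).symm
    _ = h := hh.mul_identity_eq_identity_iff.mpr hg.identity_mul

theorem mul_eq_self_iff_of_commute (hg : IsGroupIdentity g x) (hgf : Commute g f) :
    x * f = x ↔ f * x = x := by
  rw [← hg.identity_mul_eq_identity_iff, hgf.eq, hg.mul_identity_eq_identity_iff]

theorem commute_of_isIdempotentElem (hf : IsIdempotentElem f)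
    (hg : IsGroupIdentity g (x * f)) (hgf : Commute g f)
    (hh : IsGroupIdentity h (f * x)) (hhf : Commute h f) : Commute x f := by
  have left_absorb : f * (x * f) = x * f :=
    (hg.mul_eq_self_iff_of_commute hgf).mp (by rw [mul_assoc, hf.eq])
  have right_absorb : f * x * f = f * x :=
    (hh.mul_eq_self_iff_of_commute hhf).mpr (by rw [← mul_assoc, hf.eq])
  calc
    x * f = f * x * f := by rw [mul_assoc, left_absorb]
    _ = f * x := right_absorb

theorem mul (hg : IsGroupIdentity g x) (hh : IsGroupIdentity h y)
    (hgc : g ∈ Set.center S) (hhc : h ∈ Set.center S) : IsGroupIdentity (g * h) (x * y) := by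
  rw [Semigroup.mem_center_iff] at hgc hhc
  obtain ⟨u, hxu, hux⟩ := hg.exists_inverse
  obtain ⟨v, hyv, hvy⟩ := hh.exists_inverse
  refine ⟨?_, ?_, v * u, ?_, ?_⟩
  · calc
      g * h * (x * y) = g * (h * x) * y := by simp only [mul_assoc]
      _ = g * x * (h * y) := by rw [← hhc x]; simp only [mul_assoc]
      _ = x * y := by rw [hg.identity_mul, hh.identity_mul]
  · calc
      x * y * (g * h) = x * (y * g) * h := by simp only [mul_assoc]
      _ = x * g * (y * h) := by rw [hgc y]; simp only [mul_assoc]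
      _ = x * y := by rw [hg.mul_identity, hh.mul_identity]
  · calc
      x * y * (v * u) = x * (y * v * u) := by simp only [mul_assoc]
      _ = x * u * h := by rw [hyv, ← hhc u, mul_assoc]
      _ = g * h := by rw [hxu]
  · calc
      v * u * (x * y) = v * (u * x) * y := by simp only [mul_assoc]
      _ = g * (v * y) := by rw [hux, hgc v, mul_assoc]
      _ = g * h := by rw [hvy]

end IsGroupIdentity

theorem mem_center_of_isIdempotentElem {S : Type*} [Semigroup S] {f : S}
    (hgroup : ∀ x : S, ∃ g, IsGroupIdentity g x)
    (hcomm : ∀ g : S, IsIdempotentElem g → Commute g f)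
    (hf : IsIdempotentElem f) : f ∈ Set.center S := by
  refine Semigroup.mem_center_iff.mpr fun x => ?_
  obtain ⟨g, hg⟩ := hgroup (x * f)
  obtain ⟨h, hh⟩ := hgroup (f * x)
  exact IsGroupIdentity.commute_of_isIdempotentElem hf
    hg (hcomm g hg.isIdempotentElem) hh (hcomm h hh.isIdempotentElem)

theorem stmt_4_general {S : Type*} [Semigroup S] (e : S → S)
    (he : ∀ x, IsGroupIdentity (e x) x)
    (hcomm : ∀ f g : S, IsIdempotentElem f → IsIdempotentElem g → Commute f g) :
    CondA3 e := by
  have central (x : S) : e x ∈ Set.center S :=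
    have hx : IsIdempotentElem (e x) := (he x).isIdempotentElem
    mem_center_of_isIdempotentElem (fun z => ⟨e z, he z⟩) (fun g hg => hcomm g (e x) hg hx) hx
  intro x y
  exact (he (x * y)).unique ((he x).mul (he y) (central x) (central y))

/-- if (A1) and (A2) hold and the idempotents of S commute
pairwise, then (A3) holds, so S is an assembly. -/
theorem stmt_4 {S : Type*} [Semigroup S] (e s : S → S)
    (h1 : CondA1 e) (h2 : CondA2 e s)
    (hcomm : ∀ f g : S, f * f = f → g * g = g → f * g = g * f) :
    CondA3 e :=
  stmt_4_general e (fun x => ⟨(h1 x).1.2, (h1 x).1.1, s x, (h2 x).1, (h2 x).2.1⟩) hcomm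
end

section
/- Define on 2×2 rational matrices the operation X * Y = X·P·Y, where P = [[1, -1], [1, 1]] and · denotes ordinary matrix multiplication. Let A = [[1,0],[0,0]], B = [[0,1],[0,0]], C = [[0,0],[1,0]], D = [[0,0],[0,1]], and let S = {A, -A, B, -B, C, -C, D, -D}. Then: S is closed under *, the operation * is associative on S, and there exist functions e, s : S → S satisfying conditions (A1) and (A2) (indeed S is the union of the two-element groups {A,-A}, {B,-B}, {C,-C}, {D,-D} with identities A, B, -C, D respectively); but no function e : S → S can satisfy both (A1) and (A3), since B * C = A is idempotent while e(B) * e(C) = B * (-C) = -A is not idempotent. -/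
namespace Stmt5

/-- The sandwich matrix P of the Rees matrix semigroup. -/
def Pm : Matrix (Fin 2) (Fin 2) ℚ := !![1, -1; 1, 1]

def MA : Matrix (Fin 2) (Fin 2) ℚ := !![1, 0; 0, 0]
def MB : Matrix (Fin 2) (Fin 2) ℚ := !![0, 1; 0, 0]
def MC : Matrix (Fin 2) (Fin 2) ℚ := !![0, 0; 1, 0]
def MD : Matrix (Fin 2) (Fin 2) ℚ := !![0, 0; 0, 1]

/-- The sandwich multiplication X * Y = X·P·Y. -/
def op (X Y : Matrix (Fin 2) (Fin 2) ℚ) : Matrix (Fin 2) (Fin 2) ℚ := X * Pm * Y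

/-- The carrier set S = {A, -A, B, -B, C, -C, D, -D}. -/
def Sset : Set (Matrix (Fin 2) (Fin 2) ℚ) :=
  {MA, -MA, MB, -MB, MC, -MC, MD, -MD}

/-!
In terms of the matrix units `E i j`, the product is given by `E i j * E k l = P j k • E i l`. All
entries of `P` are `±1`; hence `x³ = x` on `S`. In a semigroup where `x³ = x` holds, `e x = x²` and
`s x = x` satisfy (A1) and (A2), and (A1) has no other solution. Condition (A3) would therefore say
`(x y)² = x² y²`, but `(B C)² = A² = A` while `B² C² = B (-C) = -A`.
-/

section LeastIdentity

variable {α : Type*} {mul : α → α → α} {S : Set α} {x y e e' : α}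

/-- Condition (A1) at the point `x`: `e` is a two-sided identity for `x` and lies below every other
one in `S`, in the order `e ≤ f ↔ e f = f e = e`. Membership of `e` in `S` is not part of it. -/
def IsLeastIdentity (mul : α → α → α) (S : Set α) (x e : α) : Prop :=
  mul x e = x ∧ mul e x = x ∧
    ∀ f ∈ S, mul x f = x → mul f x = x → mul e f = e ∧ mul f e = e

theorem IsLeastIdentity.unique (he : IsLeastIdentity mul S x e) (he' : IsLeastIdentity mul S x e')
    (heS : e ∈ S) (heS' : e' ∈ S) : e = e' :=
  calc
    e = mul e e' := (he.2.2 e' heS' he'.1 he'.2.1).1.symm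
    _ = e' := (he'.2.2 e heS he.1 he.2.1).2

variable [Std.Associative mul]

theorem isLeastIdentity_mul_self (hx : mul (mul x x) x = x) :
    IsLeastIdentity mul S x (mul x x) := by
  have assoc (a b c : α) : mul (mul a b) c = mul a (mul b c) := Std.Associative.assoc a b c
  refine ⟨by rw [← assoc, hx], hx, fun f _ hxf hfx => ⟨?_, ?_⟩⟩
  · rw [assoc, hxf]
  · rw [← assoc, hfx]

theorem mul_self_mul_eq_of_isLeastIdentity {e : α → α}
    (closed : ∀ a ∈ S, ∀ b ∈ S, mul a b ∈ S) (cube : ∀ a ∈ S, mul (mul a a) a = a)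
    (mem : ∀ a ∈ S, e a ∈ S) (least : ∀ a ∈ S, IsLeastIdentity mul S a (e a))
    (map_mul : ∀ a ∈ S, ∀ b ∈ S, e (mul a b) = mul (e a) (e b)) (hx : x ∈ S) (hy : y ∈ S) :
    mul (mul x y) (mul x y) = mul (mul x x) (mul y y) := by
  have e_eq_mul_self (a) (ha : a ∈ S) : e a = mul a a :=
    (least a ha).unique (isLeastIdentity_mul_self (cube a ha)) (mem a ha) (closed a ha a ha)
  rw [← e_eq_mul_self _ (closed x hx y hy), map_mul x hx y hy, e_eq_mul_self x hx,
    e_eq_mul_self y hy]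

end LeastIdentity

section SignedSingles

variable (m n R : Type*) [DecidableEq m] [DecidableEq n] [CommSemiring R]

/-- The multiples of matrix units by a square root of one. For a sandwich matrix `P` whose entries
are square roots of one too, they form a Rees matrix semigroup under `X * P * Y`. -/
def signedSingles : Set (Matrix m n R) :=
  {X | ∃ i j a, a ^ 2 = 1 ∧ X = Matrix.single i j a}

variable {m n R} [Fintype m] [Fintype n] {P : Matrix n m R} {X Y : Matrix m n R}

theorem mul_mul_mem_signedSingles (hP : ∀ j k, P j k ^ 2 = 1) (hX : X ∈ signedSingles m n R)
    (hY : Y ∈ signedSingles m n R) : X * P * Y ∈ signedSingles m n R := by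
  obtain ⟨i, j, a, ha, rfl⟩ := hX
  obtain ⟨k, l, b, hb, rfl⟩ := hY
  refine ⟨i, l, a * P j k * b, ?_, Matrix.single_mul_mul_single ..⟩
  rw [mul_pow, mul_pow, ha, hP, hb, one_mul, one_mul]

theorem sandwich_cube_eq_self (hP : ∀ j k, P j k ^ 2 = 1)
    (hX : X ∈ signedSingles m n R) : X * P * X * P * X = X := by
  obtain ⟨i, j, a, ha, rfl⟩ := hX
  rw [Matrix.single_mul_mul_single, Matrix.single_mul_mul_single]
  congr 1
  calc
    a * P j i * a * P j i * a = a ^ 2 * P j i ^ 2 * a := by ring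
    _ = a := by rw [ha, hP, one_mul, one_mul]

end SignedSingles

theorem MA_eq_single : MA = Matrix.single 0 0 1 := by
  ext i j; fin_cases i <;> fin_cases j <;> rfl

theorem MB_eq_single : MB = Matrix.single 0 1 1 := by
  ext i j; fin_cases i <;> fin_cases j <;> rfl

theorem MC_eq_single : MC = Matrix.single 1 0 1 := by
  ext i j; fin_cases i <;> fin_cases j <;> rfl

theorem MD_eq_single : MD = Matrix.single 1 1 1 := by
  ext i j; fin_cases i <;> fin_cases j <;> rfl

theorem Sset_eq_signedSingles : Sset = signedSingles (Fin 2) (Fin 2) ℚ := by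
  ext X
  simp only [Sset, signedSingles, MA_eq_single, MB_eq_single, MC_eq_single, MD_eq_single,
    Matrix.single_neg, Fin.exists_fin_two, sq_eq_one_iff, or_and_right, exists_or,
    exists_eq_left, Set.mem_insert_iff, Set.mem_singleton_iff, Set.mem_ofPred_eq, or_assoc]
  tauto

theorem Pm_apply_sq (j k : Fin 2) : Pm j k ^ 2 = 1 := by
  fin_cases j <;> fin_cases k <;> simp [Pm]

instance : Std.Associative op := ⟨fun X Y Z => by simp only [op, Matrix.mul_assoc]⟩

theorem op_mem_Sset {X Y : Matrix (Fin 2) (Fin 2) ℚ} (hX : X ∈ Sset) (hY : Y ∈ Sset) :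
    op X Y ∈ Sset := by
  rw [Sset_eq_signedSingles] at hX hY ⊢
  exact mul_mul_mem_signedSingles Pm_apply_sq hX hY

theorem op_cube_eq_self {X : Matrix (Fin 2) (Fin 2) ℚ} (hX : X ∈ Sset) : op (op X X) X = X :=
  sandwich_cube_eq_self Pm_apply_sq (Sset_eq_signedSingles ▸ hX)

theorem op_neg_neg (X Y : Matrix (Fin 2) (Fin 2) ℚ) : op (-X) (-Y) = op X Y := by
  simp only [op, Matrix.neg_mul, Matrix.mul_neg, neg_neg]

theorem op_single_single (i j k l : Fin 2) (a b : ℚ) :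
    op (Matrix.single i j a) (Matrix.single k l b) = Matrix.single i l (a * Pm j k * b) :=
  Matrix.single_mul_mul_single ..

theorem op_MA_MA : op MA MA = MA := by
  simp [MA_eq_single, op_single_single, Pm]

theorem op_MB_MB : op MB MB = MB := by
  simp [MB_eq_single, op_single_single, Pm]

theorem op_MC_MC : op MC MC = -MC := by
  simp [MC_eq_single, op_single_single, Pm, Matrix.single_neg]

theorem op_MB_MC : op MB MC = MA := by
  simp [MA_eq_single, MB_eq_single, MC_eq_single, op_single_single, Pm]

theorem op_MB_neg_MC : op MB (-MC) = -MA := by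
  rw [← op_MB_MC, op, op, Matrix.mul_neg]

theorem MA_ne_neg_MA : MA ≠ -MA := fun h => by
  have : (1 : ℚ) = -1 := congr_fun₂ h 0 0
  norm_num at this

/-- S is closed under the sandwich product, which is associative on S;
there exist functions e, s : S → S satisfying (A1) and (A2) on S (S is a union of
groups); but no function e : S → S can satisfy both (A1) and (A3), since
B * C = A is idempotent while e(B) * e(C) = B * (-C) = -A is not idempotent. -/
theorem stmt_5 :
    (∀ X ∈ Sset, ∀ Y ∈ Sset, op X Y ∈ Sset) ∧
    (∀ X ∈ Sset, ∀ Y ∈ Sset, ∀ Z ∈ Sset, op (op X Y) Z = op X (op Y Z)) ∧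
    (∃ e s : Matrix (Fin 2) (Fin 2) ℚ → Matrix (Fin 2) (Fin 2) ℚ,
      (∀ x ∈ Sset, e x ∈ Sset ∧ s x ∈ Sset) ∧
      -- (A1) on S
      (∀ x ∈ Sset, op x (e x) = x ∧ op (e x) x = x ∧
        ∀ f ∈ Sset, op x f = x → op f x = x →
          op (e x) f = e x ∧ op f (e x) = e x) ∧
      -- (A2) on S
      (∀ x ∈ Sset, op x (s x) = e x ∧ op (s x) x = e x ∧ e (s x) = e x)) ∧
    -- the witnessing computations
    (op MB MC = MA ∧ op MA MA = MA ∧ op MB (-MC) = -MA ∧ op (-MA) (-MA) ≠ -MA) ∧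
    -- no e can satisfy both (A1) and (A3) on S
    (¬ ∃ e : Matrix (Fin 2) (Fin 2) ℚ → Matrix (Fin 2) (Fin 2) ℚ,
      (∀ x ∈ Sset, e x ∈ Sset) ∧
      (∀ x ∈ Sset, op x (e x) = x ∧ op (e x) x = x ∧
        ∀ f ∈ Sset, op x f = x → op f x = x →
          op (e x) f = e x ∧ op f (e x) = e x) ∧
      (∀ x ∈ Sset, ∀ y ∈ Sset, e (op x y) = op (e x) (e y))) := by
  have cube : ∀ X ∈ Sset, op (op X X) X = X := fun X hX => op_cube_eq_self hX
  have closed : ∀ X ∈ Sset, ∀ Y ∈ Sset, op X Y ∈ Sset := fun X hX Y hY => op_mem_Sset hX hY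
  refine ⟨closed, fun X _ Y _ Z _ => Std.Associative.assoc X Y Z, ?_, ?_, ?_⟩
  · exact ⟨fun X => op X X, id, fun X hX => ⟨closed X hX X hX, hX⟩,
      fun X hX => isLeastIdentity_mul_self (cube X hX), fun X _ => ⟨rfl, rfl, rfl⟩⟩
  · refine ⟨op_MB_MC, op_MA_MA, op_MB_neg_MC, ?_⟩
    rw [op_neg_neg, op_MA_MA]
    exact MA_ne_neg_MA
  · rintro ⟨e, mem, least, map_op⟩
    have hB : MB ∈ Sset := by simp [Sset]
    have hC : MC ∈ Sset := by simp [Sset]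
    have sq_op : op (op MB MC) (op MB MC) = op (op MB MB) (op MC MC) :=
      mul_self_mul_eq_of_isLeastIdentity closed cube mem least map_op hB hC
    rw [op_MB_MC, op_MA_MA, op_MB_MB, op_MC_MC, op_MB_neg_MC] at sq_op
    exact MA_ne_neg_MA sq_op

end Stmt5
end

section
/- Let S be a semigroup with functions e, s : S → S making it an assembly (i.e., satisfying (A1), (A2), (A3)). Then S is a band of groups: the map x ↦ e(x) is a semigroup homomorphism from S to itself, its image E(S) is a band (a subsemigroup all of whose elements are idempotent), and for each f ∈ E(S) the fiber e⁻¹({f}) is a group under the induced multiplication with identity f. -/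
/-! On idempotents the relation `f * g = f ∧ g * f = f` is the natural partial order, and (A1)
says that `e x` is the least element of `S` fixing `x` from both sides. Such a least element fixes
itself, so it is idempotent; conversely an idempotent is its own least local identity. Hence the
image of `e` is the set of all idempotents, and it is closed under products because `e` is
multiplicative. In the fiber over `f` the identity is `f` by (A1), and `s` supplies inverses
by (A2). -/

section LocalIdentity

variable {S : Type*} [Mul S] {x f g : S}

/-- `f` is the least two-sided local identity of `x`: it fixes `x` on both sides and lies below
every other such element `g` in the sense that `f * g = f ∧ g * f = f`. It is the pointwise
form of (A1), spelled so that `CondA1 e` unfolds to `∀ x, IsLeastLocalIdentity x (e x)`. -/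
def IsLeastLocalIdentity (x f : S) : Prop :=
  (x * f = x ∧ f * x = x) ∧ ∀ g : S, x * g = x → g * x = x → f * g = f ∧ g * f = f

namespace IsLeastLocalIdentity

theorem isIdempotentElem (hf : IsLeastLocalIdentity x f) : IsIdempotentElem f :=
  (hf.2 f hf.1.1 hf.1.2).1

theorem unique (hf : IsLeastLocalIdentity x f) (hg : IsLeastLocalIdentity x g) : f = g :=
  calc
    f = f * g := (hf.2 g hg.1.1 hg.1.2).1.symm
    _ = g := (hg.2 f hf.1.1 hf.1.2).2

end IsLeastLocalIdentity

theorem isLeastLocalIdentity_self (hf : IsIdempotentElem f) : IsLeastLocalIdentity f f :=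
  ⟨⟨hf, hf⟩, fun _ hfg hgf => ⟨hfg, hgf⟩⟩

theorem range_eq_setOf_isIdempotentElem {e : S → S} (he : ∀ x, IsLeastLocalIdentity x (e x)) :
    Set.range e = {f | IsIdempotentElem f} := by
  refine Set.Subset.antisymm ?_ fun f hf => ⟨f, ?_⟩
  · rintro _ ⟨x, rfl⟩
    exact (he x).isIdempotentElem
  · exact (he f).unique (isLeastLocalIdentity_self hf)

end LocalIdentity

theorem map_mul_eq_of_isIdempotentElem {F M N : Type*} [Mul M] [Mul N] [FunLike F M N]
    [MulHomClass F M N] (φ : F) {f : N} (hf : IsIdempotentElem f) {a b : M}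
    (ha : φ a = f) (hb : φ b = f) : φ (a * b) = f := by
  rw [map_mul, ha, hb, hf.eq]

theorem stmt_6_general {S : Type*} [Mul S] (e : S →ₙ* S) (s : S → S)
    (he : ∀ x, IsLeastLocalIdentity x (e x))
    (hs : ∀ x, x * s x = e x ∧ s x * x = e x ∧ e (s x) = e x) :
    (Set.range e = {f : S | f * f = f}) ∧
    (∀ f ∈ Set.range e, ∀ g ∈ Set.range e, f * g ∈ Set.range e) ∧
    (∀ f ∈ Set.range e, f * f = f) ∧
    (∀ f : S, f * f = f →
      (∀ a b : S, e a = f → e b = f → e (a * b) = f) ∧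
      (∀ a : S, e a = f → f * a = a ∧ a * f = a) ∧
      (∀ a : S, e a = f → ∃ b : S, e b = f ∧ a * b = f ∧ b * a = f)) := by
  have range_eq : Set.range e = {f : S | f * f = f} := range_eq_setOf_isIdempotentElem he
  refine ⟨range_eq, fun f hf g hg => e.srange.mul_mem hf hg, range_eq.subset, fun f hf =>
    ⟨fun a b => map_mul_eq_of_isIdempotentElem e hf, ?identity, ?inverse⟩⟩
  case identity =>
    rintro a rfl
    exact (he a).1.symm
  case inverse =>
    rintro a rfl
    obtain ⟨mul_inv, inv_mul, map_inv⟩ := hs a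
    exact ⟨s a, map_inv, mul_inv, inv_mul⟩

/-- an assembly is a band of groups: e is a semigroup homomorphism
of S to itself, its image is E(S), a band (subsemigroup of idempotents), and each
fiber e⁻¹({f}) (f idempotent) is a group with identity f. -/
theorem stmt_6 {S : Type*} [Semigroup S] (e s : S → S)
    (h1 : CondA1 e) (h2 : CondA2 e s) (h3 : CondA3 e) :
    (∀ x y : S, e (x * y) = e x * e y) ∧
    (Set.range e = {f : S | f * f = f}) ∧
    (∀ f ∈ Set.range e, ∀ g ∈ Set.range e, f * g ∈ Set.range e) ∧
    (∀ f ∈ Set.range e, f * f = f) ∧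
    (∀ f : S, f * f = f →
      (∀ a b : S, e a = f → e b = f → e (a * b) = f) ∧
      (∀ a : S, e a = f → f * a = a ∧ a * f = a) ∧
      (∀ a : S, e a = f → ∃ b : S, e b = f ∧ a * b = f ∧ b * a = f)) :=
  ⟨h3, stmt_6_general ⟨e, h3⟩ s h1 h2⟩
end

section
/- Let S be a semigroup. Then S admits functions e, s : S → S satisfying (A1), (A2), (A3) such that all idempotents of S commute pairwise, if and only if S is a semilattice of groups, i.e., there exist a commutative band B and a surjective semigroup homomorphism φ : S → B such that for every b ∈ B the fiber φ⁻¹({b}) is a group under the induced multiplication. -/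
/-!
For an assembly with commuting idempotents, `e` maps `S` onto its commutative band of idempotents,
and the fibre of `e` over `f` is a group with identity `f`. Conversely, given a semilattice of
groups, let `e x` be the identity of the fibre through `x` and `s x` the inverse of `x` there. If
`i`, `j`, `k` are the identities of the fibres over `a`, `b`, `a * b`, then `k * i` is an idempotent
of the last fibre, so `k * i = k`; likewise `k * j = k`, whence `i * j = k * (i * j) = k`.
-/

/-- `G` is a group with identity `i` under the multiplication of the ambient semigroup. Closure
under multiplication is not a field, as it is automatic for the fibres of a homomorphism to a
band. -/
structure IsGroupWithIdentity {S : Type*} [Semigroup S] (G : Set S) (i : S) : Prop where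
  identity_mem : i ∈ G
  identity_mul : ∀ {a}, a ∈ G → i * a = a
  mul_identity : ∀ {a}, a ∈ G → a * i = a
  exists_inverse : ∀ {a}, a ∈ G → ∃ c ∈ G, a * c = i ∧ c * a = i

namespace IsGroupWithIdentity

variable {S : Type*} [Semigroup S]

theorem isIdempotentElem_identity {G : Set S} {i : S} (hG : IsGroupWithIdentity G i) :
    IsIdempotentElem i :=
  hG.identity_mul hG.identity_mem

theorem eq_identity_of_isIdempotentElem {G : Set S} {i f : S} (hG : IsGroupWithIdentity G i)
    (hfG : f ∈ G) (hf : IsIdempotentElem f) : f = i := by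
  obtain ⟨c, -, -, hcf⟩ := hG.exists_inverse hfG
  calc f = i * f := (hG.identity_mul hfG).symm
    _ = c * (f * f) := by rw [← hcf, mul_assoc]
    _ = i := by rw [hf.eq, hcf]

theorem identity_mul_idempotent {B : Type*} [Mul B] {φ : S →ₙ* B} {b : B} {i f : S}
    (hG : IsGroupWithIdentity (φ ⁻¹' {b}) i) (hf : IsIdempotentElem f) (hbf : b * φ f = b) :
    i * f = i := by
  have hif : i * f ∈ φ ⁻¹' {b} := by
    have hi : φ i = b := hG.identity_mem
    simp only [Set.mem_preimage, Set.mem_singleton_iff, map_mul, hi, hbf]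
  refine hG.eq_identity_of_isIdempotentElem hif ?_
  calc i * f * (i * f) = i * f * i * f := (mul_assoc _ _ _).symm
    _ = i * f := by rw [hG.mul_identity hif, mul_assoc, hf.eq]

theorem identity_mul_identity {B : Type*} [CommSemigroup B] (hB : ∀ b : B, IsIdempotentElem b)
    {φ : S →ₙ* B} {a b : B} {i j k : S} (ha : IsGroupWithIdentity (φ ⁻¹' {a}) i)
    (hb : IsGroupWithIdentity (φ ⁻¹' {b}) j) (hab : IsGroupWithIdentity (φ ⁻¹' {a * b}) k) :
    i * j = k := by
  have hi : φ i = a := ha.identity_mem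
  have hj : φ j = b := hb.identity_mem
  have hki : k * i = k := hab.identity_mul_idempotent ha.isIdempotentElem_identity <| by
    rw [hi, mul_right_comm, (hB a).eq]
  have hkj : k * j = k := hab.identity_mul_idempotent hb.isIdempotentElem_identity <| by
    rw [hj, mul_assoc, (hB b).eq]
  have hij : i * j ∈ φ ⁻¹' {a * b} := by
    simp only [Set.mem_preimage, Set.mem_singleton_iff, map_mul, hi, hj]
  rw [← hab.identity_mul hij, ← mul_assoc, hki, hkj]

end IsGroupWithIdentity

section Assembly

variable {S : Type*} [Semigroup S] {e s : S → S}

theorem CondA1.isIdempotentElem (hA1 : CondA1 e) (x : S) : IsIdempotentElem (e x) :=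
  ((hA1 x).2 (e x) (hA1 x).1.1 (hA1 x).1.2).1

theorem CondA1.apply_eq_self (hA1 : CondA1 e) {f : S} (hf : IsIdempotentElem f) : e f = f :=
  ((hA1 f).2 f hf hf).1.symm.trans (hA1 f).1.2

theorem CondA2.condA1 (hA2 : CondA2 e s) (he : ∀ x, x * e x = x ∧ e x * x = x) : CondA1 e := by
  refine fun x => ⟨he x, fun f hxf hfx => ⟨?_, ?_⟩⟩
  · rw [← (hA2 x).2.1, mul_assoc, hxf]
  · rw [← (hA2 x).1, ← mul_assoc, hfx]

theorem CondA1.isGroupWithIdentity_fiber (hA1 : CondA1 e) (hA2 : CondA2 e s) {f : S}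
    (hf : IsIdempotentElem f) : IsGroupWithIdentity (e ⁻¹' {f}) f where
  identity_mem := hA1.apply_eq_self hf
  identity_mul := by
    rintro a rfl
    exact (hA1 a).1.2
  mul_identity := by
    rintro a rfl
    exact (hA1 a).1.1
  exists_inverse := by
    rintro a rfl
    obtain ⟨has, hsa, hes⟩ := hA2 a
    exact ⟨s a, hes, has, hsa⟩

end Assembly

/-- The subsemigroup of all idempotents of a semigroup in which idempotents commute; it is the
semilattice over which an assembly decomposes into groups. -/
def idempotentSubsemigroup {S : Type*} [Semigroup S]
    (hcomm : ∀ f g : S, IsIdempotentElem f → IsIdempotentElem g → Commute f g) :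
    Subsemigroup S where
  carrier := {f | IsIdempotentElem f}
  mul_mem' {f g} hf hg := IsIdempotentElem.mul_of_commute (hcomm f g hf hg) hf hg

section SemilatticeOfGroups

variable {S B : Type*} [Semigroup S] [CommSemigroup B] {φ : S →ₙ* B} {i : B → S}

theorem commute_of_isGroupWithIdentity_fiber (hB : ∀ b : B, IsIdempotentElem b)
    (hi : ∀ b, IsGroupWithIdentity (φ ⁻¹' {b}) (i b)) {f g : S} (hf : IsIdempotentElem f)
    (hg : IsIdempotentElem g) : Commute f g := by
  have hfi : f = i (φ f) := (hi (φ f)).eq_identity_of_isIdempotentElem rfl hf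
  have hgi : g = i (φ g) := (hi (φ g)).eq_identity_of_isIdempotentElem rfl hg
  have himul (a b : B) : i a * i b = i (a * b) :=
    (hi a).identity_mul_identity hB (hi b) (hi (a * b))
  calc f * g = i (φ f * φ g) := by rw [← himul, ← hfi, ← hgi]
    _ = i (φ g * φ f) := by rw [mul_comm]
    _ = g * f := by rw [← himul, ← hfi, ← hgi]

theorem exists_assembly_of_isGroupWithIdentity_fiber (hB : ∀ b : B, IsIdempotentElem b)
    (hi : ∀ b, IsGroupWithIdentity (φ ⁻¹' {b}) (i b)) :
    ∃ e s : S → S, CondA1 e ∧ CondA2 e s ∧ CondA3 e := by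
  choose s hsφ hxs hsx using fun x => (hi (φ x)).exists_inverse (a := x) rfl
  have hA2 : CondA2 (fun x => i (φ x)) s := fun x => ⟨hxs x, hsx x, congrArg i (hsφ x)⟩
  refine ⟨fun x => i (φ x), s, hA2.condA1 fun x => ?_, hA2, fun x y => ?_⟩
  · exact ⟨(hi (φ x)).mul_identity rfl, (hi (φ x)).identity_mul rfl⟩
  · calc i (φ (x * y)) = i (φ x * φ y) := by rw [map_mul]
      _ = i (φ x) * i (φ y) := ((hi _).identity_mul_identity hB (hi _) (hi _)).symm

end SemilatticeOfGroups

/-- a semigroup S admits an assembly structure (A1)-(A3) with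
pairwise commuting idempotents iff S is a semilattice of groups, i.e. there
is a commutative band B and a surjective homomorphism φ : S → B all of whose
fibers are groups. -/
theorem stmt_8 {S : Type u} [Semigroup S] :
    (∃ e s : S → S, CondA1 e ∧ CondA2 e s ∧ CondA3 e ∧
      ∀ f g : S, f * f = f → g * g = g → f * g = g * f) ↔
    (∃ (B : Type u) (mul : B → B → B) (φ : S → B),
      (∀ a b c : B, mul (mul a b) c = mul a (mul b c)) ∧
      (∀ b : B, mul b b = b) ∧
      (∀ b c : B, mul b c = mul c b) ∧
      (∀ x y : S, φ (x * y) = mul (φ x) (φ y)) ∧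
      Function.Surjective φ ∧
      ∀ b : B, ∃ i : S, φ i = b ∧
        (∀ a : S, φ a = b → i * a = a ∧ a * i = a) ∧
        ∀ a : S, φ a = b → ∃ c : S, φ c = b ∧ a * c = i ∧ c * a = i) := by
  constructor
  · rintro ⟨e, s, hA1, hA2, hA3, hcomm⟩
    refine ⟨idempotentSubsemigroup hcomm, (· * ·), fun x => ⟨e x, hA1.isIdempotentElem x⟩,
      mul_assoc, fun f => Subtype.ext f.2, fun f g => Subtype.ext (hcomm f g f.2 g.2),
      fun x y => Subtype.ext (hA3 x y), fun f => ⟨f, Subtype.ext (hA1.apply_eq_self f.2)⟩, ?_⟩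
    rintro ⟨f, hf⟩
    have hfiber := hA1.isGroupWithIdentity_fiber hA2 hf
    simp only [Subtype.ext_iff]
    exact ⟨f, hfiber.identity_mem,
      fun a ha => ⟨hfiber.identity_mul ha, hfiber.mul_identity ha⟩,
      fun a ha => hfiber.exists_inverse ha⟩
  · rintro ⟨B, mul, φ, hassoc, hidem, hcomm, hφ, -, hfiber⟩
    let _ : CommSemigroup B := { mul := mul, mul_assoc := hassoc, mul_comm := hcomm }
    let φHom : S →ₙ* B := ⟨φ, hφ⟩
    choose i hmem hidentity hinverse using hfiber
    have hi (b : B) : IsGroupWithIdentity (φHom ⁻¹' {b}) (i b) :=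
      ⟨hmem b, fun ha => (hidentity b _ ha).1, fun ha => (hidentity b _ ha).2, hinverse b _⟩
    obtain ⟨e, s, hA1, hA2, hA3⟩ := exists_assembly_of_isGroupWithIdentity_fiber hidem hi
    exact ⟨e, s, hA1, hA2, hA3, fun f g => commute_of_isGroupWithIdentity_fiber hidem hi⟩
end

section
/- Let A and B be semigroups with functions e_A, s_A : A → A and e_B, s_B : B → B satisfying (A1), (A2) and (A3) (assemblies), and let φ : A → B be a semigroup homomorphism. Then the image φ(A) is a subassembly of B: it is nonempty and closed under multiplication, e_B and s_B. -/
/-- A subassembly: a nonempty subset closed under multiplication, e and s. -/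
def IsSubassembly {A : Type*} [Semigroup A] (e s : A → A) (B : Set A) : Prop :=
  B.Nonempty ∧ (∀ x ∈ B, ∀ y ∈ B, x * y ∈ B) ∧ (∀ x ∈ B, e x ∈ B) ∧ (∀ x ∈ B, s x ∈ B)

/-!
In an assembly `s x` is a group inverse of `x` and `e x = x * s x`. A group inverse is unique and
its defining equations are preserved by homomorphisms, so `s (φ a) = φ (s a)` and hence also
`e (φ a) = φ (e a)`.
-/

section GroupInverse

variable {S T : Type*} [Semigroup S] [Semigroup T]

/-- `y` is a group inverse of `x`: an inverse of `x` in the sense of von Neumann that commutes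
with `x`. It describes `s x` by equations in the multiplication alone, which homomorphisms
preserve. -/
structure IsGroupInverse_s16 (x y : S) : Prop where
  commute : Commute x y
  mul_inv_mul : x * y * x = x
  inv_mul_inv : y * x * y = y

namespace IsGroupInverse_s16

theorem mul_inv_eq_mul_inv {x y z : S} (hy : IsGroupInverse_s16 x y) (hz : IsGroupInverse_s16 x z) :
    x * y = x * z :=
  calc
    x * y = x * z * x * y := by rw [hz.mul_inv_mul]
    _ = z * (x * (x * y)) := by rw [hz.commute.eq]; simp only [mul_assoc]
    _ = z * (x * y * x) := by rw [mul_assoc x y x, ← hy.commute.eq]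
    _ = x * z := by rw [hy.mul_inv_mul, hz.commute.eq]

theorem unique {x y z : S} (hy : IsGroupInverse_s16 x y) (hz : IsGroupInverse_s16 x z) : y = z :=
  calc
    y = y * (x * y) := by rw [← mul_assoc, hy.inv_mul_inv]
    _ = y * x * z := by rw [hy.mul_inv_eq_mul_inv hz, mul_assoc]
    _ = z * x * z := by rw [← hy.commute.eq, hy.mul_inv_eq_mul_inv hz, hz.commute.eq]
    _ = z := hz.inv_mul_inv

theorem map {x y : S} (h : IsGroupInverse_s16 x y) (φ : S →ₙ* T) : IsGroupInverse_s16 (φ x) (φ y) where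
  commute := h.commute.map φ
  mul_inv_mul := by rw [← map_mul, ← map_mul, h.mul_inv_mul]
  inv_mul_inv := by rw [← map_mul, ← map_mul, h.inv_mul_inv]

end IsGroupInverse_s16

theorem CondA2.isGroupInverse {e s : S → S} (h₂ : CondA2 e s) (h₁ : CondA1 e) (x : S) :
    IsGroupInverse_s16 x (s x) := by
  obtain ⟨mul_s, s_mul, e_s⟩ := h₂ x
  have e_mul_s : e x * s x = s x := e_s ▸ (h₁ (s x)).1.2
  exact
    { commute := mul_s.trans s_mul.symm
      mul_inv_mul := by rw [mul_s, (h₁ x).1.2]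
      inv_mul_inv := by rw [s_mul, e_mul_s] }

end GroupInverse

theorem stmt_16_general {A B : Type*} [Semigroup A] [Semigroup B] [Nonempty A] {e s : B → B}
    (hA : ∀ a : A, ∃ a', IsGroupInverse_s16 a a') (hB₁ : CondA1 e) (hB₂ : CondA2 e s)
    (φ : A →ₙ* B) : IsSubassembly e s (Set.range φ) := by
  have s_map {a a' : A} (h : IsGroupInverse_s16 a a') : s (φ a) = φ a' :=
    (hB₂.isGroupInverse hB₁ (φ a)).unique (h.map φ)
  refine ⟨Set.range_nonempty φ, ?mul, ?e, ?s⟩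
  case mul =>
    rintro _ ⟨a, rfl⟩ _ ⟨b, rfl⟩
    exact ⟨a * b, map_mul φ a b⟩
  case e =>
    rintro _ ⟨a, rfl⟩
    obtain ⟨a', h⟩ := hA a
    exact ⟨a * a', by rw [map_mul, ← s_map h, (hB₂ (φ a)).1]⟩
  case s =>
    rintro _ ⟨a, rfl⟩
    obtain ⟨a', h⟩ := hA a
    exact ⟨a', (s_map h).symm⟩

/-- the image of a semigroup homomorphism between assemblies is a
subassembly of the codomain. -/
theorem stmt_16 {A B : Type*} [Semigroup A] [Semigroup B] [Nonempty A]
    (eA sA : A → A) (eB sB : B → B)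
    (hA1 : CondA1 eA) (hA2 : CondA2 eA sA) (hA3 : CondA3 eA)
    (hB1 : CondA1 eB) (hB2 : CondA2 eB sB) (hB3 : CondA3 eB)
    (φ : A → B) (hφ : ∀ x y : A, φ (x * y) = φ x * φ y) :
    IsSubassembly eB sB (Set.range φ) :=
  stmt_16_general (fun a => ⟨sA a, hA2.isGroupInverse hA1 a⟩) hB1 hB2 ⟨φ, hφ⟩
end

section
/- Let A and B be semigroups with functions e_A, s_A : A → A and e_B, s_B : B → B satisfying (A1), (A2) and (A3) (assemblies), let φ : A → B be a semigroup homomorphism, and define Ker(φ) = φ⁻¹(φ(E(A))) = {x ∈ A : φ(x) = φ(f) for some idempotent f of A}. Then E(A) ⊆ Ker(φ), and φ is injective if and only if φ is injective on E(A) and Ker(φ) = E(A). -/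
/-! If `φ x = φ y`, `x * a * x = x` and `y * b * y = y`, then `y * a` has the same image as the
idempotent `x * a`, and `b * x` has the same image as the idempotent `b * y`. When the fibres of `φ`
through idempotents are singletons this gives `y * a = x * a` and `b * x = b * y`, that is
`x = y * a * x` and `y = y * b * x`, so `y = y * b * (y * a * x) = y * a * x = x`. -/

/-- Regularity in the sense of von Neumann. Mathlib's `IsRegular` is a different notion
(cancellability of an element). -/
def IsRegularSemigroup (S : Type*) [Semigroup S] : Prop :=
  ∀ x : S, ∃ a : S, x * a * x = x

/-- The kernel `Ker(φ) = φ⁻¹(φ(E(A)))` of a map, in the sense of semigroup theory: the set of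
elements with the same image as some idempotent. -/
def idempotentKernel {A B : Type*} [Mul A] (φ : A → B) : Set A :=
  {x | ∃ f, IsIdempotentElem f ∧ φ x = φ f}

section Kernel

variable {A B : Type*} [Mul A]

theorem setOf_isIdempotentElem_subset_idempotentKernel (φ : A → B) :
    {f : A | IsIdempotentElem f} ⊆ idempotentKernel φ :=
  fun f hf ↦ ⟨f, hf, rfl⟩

theorem injOn_and_idempotentKernel_eq_iff {φ : A → B} :
    Set.InjOn φ {f | IsIdempotentElem f} ∧ idempotentKernel φ = {f | IsIdempotentElem f} ↔
      ∀ x f, IsIdempotentElem f → φ x = φ f → x = f := by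
  constructor
  · rintro ⟨hinj, hker⟩ x f hf hxf
    have hx : x ∈ idempotentKernel φ := ⟨f, hf, hxf⟩
    rw [hker] at hx
    exact hinj hx hf hxf
  · intro hfib
    refine ⟨fun x _ f hf hxf ↦ hfib x f hf hxf, Set.Subset.antisymm ?_
      (setOf_isIdempotentElem_subset_idempotentKernel φ)⟩
    rintro x ⟨f, hf, hxf⟩
    exact hfib x f hf hxf ▸ hf

end Kernel

section Regular

variable {S : Type*} [Semigroup S]

theorem isIdempotentElem_mul_right_of_mul_mul_eq_self {x a : S} (h : x * a * x = x) :
    IsIdempotentElem (x * a) := by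
  rw [IsIdempotentElem, ← mul_assoc, h]

theorem isIdempotentElem_mul_left_of_mul_mul_eq_self {x a : S} (h : x * a * x = x) :
    IsIdempotentElem (a * x) := by
  rw [IsIdempotentElem, mul_assoc, ← mul_assoc x, h]

theorem CondA1.isRegularSemigroup {e s : S → S} (h₁ : CondA1 e) (h₂ : CondA2 e s) :
    IsRegularSemigroup S :=
  fun x ↦ ⟨s x, by rw [(h₂ x).1, (h₁ x).1.2]⟩

theorem IsRegularSemigroup.injective_iff_forall_isIdempotentElem {B : Type*} [Mul B]
    (hS : IsRegularSemigroup S) (φ : S →ₙ* B) :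
    Function.Injective φ ↔ ∀ x f, IsIdempotentElem f → φ x = φ f → x = f := by
  refine ⟨fun hinj _ _ _ hxf ↦ hinj hxf, fun hfib x y hxy ↦ ?_⟩
  obtain ⟨a, ha⟩ := hS x
  obtain ⟨b, hb⟩ := hS y
  have hya : y * a = x * a :=
    hfib _ _ (isIdempotentElem_mul_right_of_mul_mul_eq_self ha)
      (by rw [map_mul, map_mul, hxy])
  have hbx : b * x = b * y :=
    hfib _ _ (isIdempotentElem_mul_left_of_mul_mul_eq_self hb)
      (by rw [map_mul, map_mul, hxy])
  have hx : y * a * x = x := by rw [hya, ha]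
  have hy : y * b * x = y := by rw [mul_assoc, hbx, ← mul_assoc, hb]
  calc
    x = y * a * x := hx.symm
    _ = y * b * y * a * x := by rw [hb]
    _ = y * b * (y * a * x) := by simp only [mul_assoc]
    _ = y := by rw [hx, hy]

end Regular

theorem stmt_17_general {A B : Type*} [Semigroup A] [Mul B] (hA : IsRegularSemigroup A)
    (φ : A →ₙ* B) :
    {f : A | IsIdempotentElem f} ⊆ idempotentKernel φ ∧
      (Function.Injective φ ↔
        Set.InjOn φ {f | IsIdempotentElem f} ∧
          idempotentKernel φ = {f | IsIdempotentElem f}) :=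
  ⟨setOf_isIdempotentElem_subset_idempotentKernel φ,
    (hA.injective_iff_forall_isIdempotentElem φ).trans injOn_and_idempotentKernel_eq_iff.symm⟩

/-- for a homomorphism φ of assemblies, with
Ker(φ) = {x : ∃ idempotent f, φ(x) = φ(f)}, one has E(A) ⊆ Ker(φ), and φ is
injective iff φ is injective on E(A) and Ker(φ) = E(A). -/
theorem stmt_17 {A B : Type*} [Semigroup A] [Semigroup B]
    (eA sA : A → A) (eB sB : B → B)
    (hA1 : CondA1 eA) (hA2 : CondA2 eA sA) (hA3 : CondA3 eA)
    (hB1 : CondA1 eB) (hB2 : CondA2 eB sB) (hB3 : CondA3 eB)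
    (φ : A → B) (hφ : ∀ x y : A, φ (x * y) = φ x * φ y) :
    ({f : A | f * f = f} ⊆ {x : A | ∃ f : A, f * f = f ∧ φ x = φ f}) ∧
    (Function.Injective φ ↔
      (Set.InjOn φ {f : A | f * f = f} ∧
        {x : A | ∃ f : A, f * f = f ∧ φ x = φ f} = {f : A | f * f = f})) :=
  stmt_17_general (hA1.isRegularSemigroup hA2) ⟨φ, hφ⟩
end
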